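/- arXiv:2605.12995 — 3 statements merged into one kernel-verified Lean document; each statement's English description precedes it below -/
import Mathlib

section
/- Let E be a real normed vector space, θ₀ ∈ E, ε ∈ (0,1), A ∈ ℝ, and let ρ : E → ℝ be differentiable at θ₀ with ρ(θ₀) = 1. Then the clipped surrogate function θ ↦ min(ρ(θ)·A, clip(ρ(θ), 1−ε, 1+ε)·A) is differentiable at θ₀ and its Fréchet derivative at θ₀ equals A · Dρ(θ₀), where Dρ(θ₀) is the Fréchet derivative of ρ at θ₀. -/
/-- Clipping operator: clip(x, a, b) = max(a, min(x, b)). -/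
noncomputable def clip (x a b : ℝ) : ℝ := max a (min x b)

/-- If `ρ` is differentiable at `θ₀` with `ρ θ₀ = 1` and `ε ∈ (0,1)`, then the
clipped surrogate `θ ↦ min (ρ θ * A) (clip (ρ θ) (1-ε) (1+ε) * A)` is differentiable at `θ₀`
with Fréchet derivative `A • Dρ(θ₀)`. -/
theorem clipped_surrogate_hasFDerivAt
    {E : Type*} [NormedAddCommGroup E] [NormedSpace ℝ E]
    (θ₀ : E) (ε A : ℝ) (hε0 : 0 < ε) (hε1 : ε < 1)
    (ρ : E → ℝ) (hρ : DifferentiableAt ℝ ρ θ₀) (hρ1 : ρ θ₀ = 1) :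
    HasFDerivAt (fun θ => min (ρ θ * A) (clip (ρ θ) (1 - ε) (1 + ε) * A))
      (A • fderiv ℝ ρ θ₀) θ₀ := by
  refine (hρ.hasFDerivAt.mul_const A).congr_of_eventuallyEq ?_
  have hc := hρ.continuousAt
  have h1 : ∀ᶠ θ in nhds θ₀, 1 - ε < ρ θ :=
    hc.eventually (lt_mem_nhds (by rw [hρ1]; linarith))
  have h2 : ∀ᶠ θ in nhds θ₀, ρ θ < 1 + ε :=
    hc.eventually (gt_mem_nhds (by rw [hρ1]; linarith))
  filter_upwards [h1, h2] with θ ha hb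
  have h : clip (ρ θ) (1 - ε) (1 + ε) = ρ θ := by
    unfold clip
    rw [min_eq_left hb.le, max_eq_right ha.le]
  rw [h, min_self]
end

section
/- Let E be a real normed vector space, θ₀ ∈ E, ε ∈ (0,1), G ≥ 1 a natural number. For each rollout index i ∈ {1,…,G}, let T_i ≥ 1 be a number of tokens, let A_i ∈ ℝ be a scalar advantage, and for each t ∈ {1,…,T_i} let ℓ_{i,t} : E → ℝ be a log-probability function differentiable at θ₀; define the per-token importance ratio ρ_{i,t}(θ) = exp(ℓ_{i,t}(θ) − ℓ_{i,t}(θ₀)). Define the phase loss L(θ) = −(1/G) Σ_{i=1}^{G} (1/T_i) Σ_{t=1}^{T_i} min(ρ_{i,t}(θ)·A_i, clip(ρ_{i,t}(θ), 1−ε, 1+ε)·A_i). Then L is differentiable at θ₀ and its Fréchet derivative at θ₀ equals the REINFORCE gradient −(1/G) Σ_{i=1}^{G} (A_i/T_i) Σ_{t=1}^{T_i} Dℓ_{i,t}(θ₀), which is a linear combination of the per-token log-probability derivatives weighted uniformly by the rollout advantage A_i. -/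
/-- The GRPO phase loss
`L(θ) = -(1/G) Σᵢ (1/Tᵢ) Σₜ min(ρ_{i,t}(θ)·Aᵢ, clip(ρ_{i,t}(θ), 1-ε, 1+ε)·Aᵢ)`,
with per-token importance ratios `ρ_{i,t}(θ) = exp(ℓ_{i,t}(θ) - ℓ_{i,t}(θ₀))`, is differentiable
at `θ₀` and its Fréchet derivative equals the REINFORCE gradient
`-(1/G) Σᵢ (Aᵢ/Tᵢ) Σₜ Dℓ_{i,t}(θ₀)`. -/
theorem phase_loss_hasFDerivAt_reinforce
    {E : Type*} [NormedAddCommGroup E] [NormedSpace ℝ E]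
    (θ₀ : E) (ε : ℝ) (hε0 : 0 < ε) (hε1 : ε < 1)
    (G : ℕ) (hG : 1 ≤ G)
    (T : Fin G → ℕ) (hT : ∀ i, 1 ≤ T i)
    (A : Fin G → ℝ)
    (ℓ : (i : Fin G) → Fin (T i) → E → ℝ)
    (hℓ : ∀ i t, DifferentiableAt ℝ (ℓ i t) θ₀) :
    HasFDerivAt
      (fun θ => -(1 / (G : ℝ)) * ∑ i : Fin G, (1 / (T i : ℝ)) *
        ∑ t : Fin (T i),
          min (Real.exp (ℓ i t θ - ℓ i t θ₀) * A i)
              (clip (Real.exp (ℓ i t θ - ℓ i t θ₀)) (1 - ε) (1 + ε) * A i))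
      (-(1 / (G : ℝ)) • ∑ i : Fin G, (A i / (T i : ℝ)) •
        ∑ t : Fin (T i), fderiv ℝ (ℓ i t) θ₀)
      θ₀ := by
  have key : ∀ (i : Fin G) (t : Fin (T i)), HasFDerivAt
      (fun θ => min (Real.exp (ℓ i t θ - ℓ i t θ₀) * A i)
              (clip (Real.exp (ℓ i t θ - ℓ i t θ₀)) (1 - ε) (1 + ε) * A i))
      (A i • fderiv ℝ (ℓ i t) θ₀) θ₀ := by
    intro i t
    have h1 : HasFDerivAt (fun θ => Real.exp (ℓ i t θ - ℓ i t θ₀))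
        (fderiv ℝ (ℓ i t) θ₀) θ₀ := by
      have h := ((hℓ i t).hasFDerivAt.sub_const (ℓ i t θ₀)).exp
      simpa using h
    have h2 := h1.mul_const (A i)
    refine h2.congr_of_eventuallyEq ?_
    have hc := h1.continuousAt
    have hm : Set.Ioo (1 - ε) (1 + ε) ∈ nhds (Real.exp (ℓ i t θ₀ - ℓ i t θ₀)) := by
      apply Ioo_mem_nhds <;> simp [hε0]
    filter_upwards [hc hm] with θ hθ
    have h3 : 1 - ε < Real.exp (ℓ i t θ - ℓ i t θ₀) := hθ.1
    have h4 : Real.exp (ℓ i t θ - ℓ i t θ₀) < 1 + ε := hθ.2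
    simp only [clip]
    rw [min_eq_left h4.le, max_eq_right h3.le, min_self]
  have h := (HasFDerivAt.fun_sum (u := Finset.univ) (fun i _ =>
    (HasFDerivAt.fun_sum (u := Finset.univ) (fun t _ => key i t)).const_mul
      (1 / (T i : ℝ)))).const_mul (-(1 / (G : ℝ)))
  refine h.congr_fderiv ?_
  congr 1
  refine Finset.sum_congr rfl fun i _ => ?_
  rw [← Finset.smul_sum, smul_smul]
  congr 1
  ring
end

section
/- (First-order equivalence of the clipped surrogate and the linearized surrogate.) Let E be a real normed vector space, θ₀ ∈ E, ε ∈ (0,1), A ∈ ℝ, and let ℓ : E → ℝ be differentiable at θ₀; define the importance ratio ρ(θ) = exp(ℓ(θ) − ℓ(θ₀)). Then the clipped surrogate f(θ) = min(ρ(θ)·A, clip(ρ(θ), 1−ε, 1+ε)·A) and the REINFORCE surrogate g(θ) = A·(ℓ(θ) − ℓ(θ₀)) + A take the same value at θ₀ (namely A) and have the same Fréchet derivative at θ₀ (namely A·Dℓ(θ₀)). -/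
/-- **First-order equivalence of the clipped surrogate and the linearized
surrogate.** With importance ratio `ρ(θ) = exp(ℓ(θ) - ℓ(θ₀))`, the clipped surrogate
`f(θ) = min(ρ(θ)·A, clip(ρ(θ), 1-ε, 1+ε)·A)` and the REINFORCE surrogate
`g(θ) = A·(ℓ(θ) - ℓ(θ₀)) + A` agree at `θ₀` (both equal `A`) and have the same Fréchet
derivative `A • Dℓ(θ₀)` at `θ₀`. -/
theorem clipped_surrogate_first_order_equiv_reinforce
    {E : Type*} [NormedAddCommGroup E] [NormedSpace ℝ E]
    (θ₀ : E) (ε A : ℝ) (hε0 : 0 < ε) (hε1 : ε < 1)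
    (ℓ : E → ℝ) (hℓ : DifferentiableAt ℝ ℓ θ₀) :
    (min (Real.exp (ℓ θ₀ - ℓ θ₀) * A)
        (clip (Real.exp (ℓ θ₀ - ℓ θ₀)) (1 - ε) (1 + ε) * A) = A) ∧
    (A * (ℓ θ₀ - ℓ θ₀) + A = A) ∧
    HasFDerivAt
      (fun θ => min (Real.exp (ℓ θ - ℓ θ₀) * A)
        (clip (Real.exp (ℓ θ - ℓ θ₀)) (1 - ε) (1 + ε) * A))
      (A • fderiv ℝ ℓ θ₀) θ₀ ∧
    HasFDerivAt (fun θ => A * (ℓ θ - ℓ θ₀) + A) (A • fderiv ℝ ℓ θ₀) θ₀ := by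
  have key : ∀ x : ℝ, 1 - ε ≤ x → x ≤ 1 + ε →
      min (x * A) (clip x (1 - ε) (1 + ε) * A) = x * A := by
    intro x h1 h2
    unfold clip
    rw [min_eq_left h2, max_eq_right h1, min_self]
  have hl := hℓ.hasFDerivAt
  refine ⟨?_, by simp, ?_, ?_⟩
  · rw [sub_self, Real.exp_zero, key 1 (by linarith) (by linarith), one_mul]
  · have hd : HasFDerivAt (fun θ => Real.exp (ℓ θ - ℓ θ₀) * A) (A • fderiv ℝ ℓ θ₀) θ₀ := by
      have h := ((hl.sub_const (ℓ θ₀)).exp).mul_const A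
      simpa using h
    have hc : Filter.Tendsto (fun θ => Real.exp (ℓ θ - ℓ θ₀)) (nhds θ₀) (nhds 1) := by
      have h := ((hl.sub_const (ℓ θ₀)).exp).continuousAt.tendsto
      simpa using h
    refine hd.congr_of_eventuallyEq ?_
    filter_upwards [hc.eventually (Icc_mem_nhds (show 1 - ε < 1 by linarith)
      (show (1 : ℝ) < 1 + ε by linarith))] with θ hθ
    exact key _ hθ.1 hθ.2
  · exact ((hl.sub_const (ℓ θ₀)).const_mul A).add_const A
end
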